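/- arXiv:2505.01665 — 5 statements merged into one kernel-verified Lean document; each statement's English description precedes it below -/
import Mathlib

section
/- (Training Effectiveness) Let q ≥ 2 and γ_k = 1/2 − ρ_k. Then (1/N)·∑_{n=1}^N 𝟙(g_K(n) ≤ 0) ≤ (1/N)·∑_{n=1}^N exp(−g_K(n)) = ∏_{k=1}^K Z_k ≤ exp(−(4/q)·∑_{k=1}^K γ_k²), where 𝟙(·) is the indicator function. -/
/-- One-step bound: `(1-ρ) e^{-α} + ρ e^{α} ≤ exp(-(4/q) γ²)`. -/
lemma apw_step (q r : ℝ) (hq : 2 ≤ q) (h0 : 0 < r) (h1 : r < 1) :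
    (1 - r) * Real.exp (-((1 / q) * Real.log ((1 - r) / r)))
      + r * Real.exp ((1 / q) * Real.log ((1 - r) / r))
      ≤ Real.exp (-(4 / q) * (1 / 2 - r) ^ 2) := by
  have hq0 : 0 < q := by linarith
  have ha : 0 < 1 - r := by linarith
  set L := Real.log ((1 - r) / r) with hL
  have hexpL : Real.exp L = (1 - r) / r := Real.exp_log (by positivity)
  have hs0 : 0 ≤ 2 / q := by positivity
  have hs1 : 2 / q ≤ 1 := by rw [div_le_one hq0]; exact hq
  have hJ := (Real.concaveOn_rpow hs0 hs1).2 (x := Real.exp (-(L / 2))) (y := Real.exp (L / 2))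
    (Set.mem_Ici.2 (Real.exp_pos _).le) (Set.mem_Ici.2 (Real.exp_pos _).le) ha.le h0.le (by ring)
  simp only [smul_eq_mul, ← Real.exp_mul] at hJ
  have e1 : -(L / 2) * (2 / q) = -((1 / q) * L) := by ring
  have e2 : L / 2 * (2 / q) = (1 / q) * L := by ring
  rw [e1, e2] at hJ
  refine hJ.trans ?_
  have hpos : 0 < Real.exp (L / 2) := Real.exp_pos _
  have hsq : Real.exp (L / 2) ^ 2 = (1 - r) / r := by
    rw [← hexpL, ← Real.exp_nat_mul]; congr 1; push_cast; ring
  have hsq' : r * Real.exp (L / 2) ^ 2 = 1 - r := by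
    rw [hsq]; field_simp
  have hval : (1 - r) * Real.exp (-(L / 2)) + r * Real.exp (L / 2) = 2 * r * Real.exp (L / 2) := by
    rw [Real.exp_neg, ← hsq']; field_simp; ring
  have hle : 2 * r * Real.exp (L / 2) ≤ Real.exp (-2 * (1 / 2 - r) ^ 2) := by
    refine (sq_le_sq₀ (by positivity) (Real.exp_pos _).le).1 ?_
    have h3 : (2 * r * Real.exp (L / 2)) ^ 2 = 1 - 4 * (1 / 2 - r) ^ 2 := by
      linear_combination 4 * r * hsq'
    have h4 : Real.exp (-2 * (1 / 2 - r) ^ 2) ^ 2 = Real.exp (-4 * (1 / 2 - r) ^ 2) := by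
      rw [← Real.exp_nat_mul]; congr 1; push_cast; ring
    rw [h3, h4]
    linarith [Real.add_one_le_exp (-4 * (1 / 2 - r) ^ 2)]
  rw [hval]
  calc (2 * r * Real.exp (L / 2)) ^ (2 / q)
      ≤ (Real.exp (-2 * (1 / 2 - r) ^ 2)) ^ (2 / q) :=
        Real.rpow_le_rpow (by positivity) hle hs0
    _ = _ := by rw [← Real.exp_mul]; congr 1; ring

/-- Training Effectiveness (Theorem): with the APW weighting scheme,
`(1/N)·∑ₙ 𝟙(g_K(n) ≤ 0) ≤ (1/N)·∑ₙ exp(−g_K(n)) = ∏_{k=1}^K Z_k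
  ≤ exp(−(4/q)·∑_{k=1}^K γ_k²)`. -/
theorem stmt_2 (N : ℕ) (hN : 1 ≤ N) (q : ℝ) (hq : 2 ≤ q)
    (β : ℕ → Fin N → ℝ) (α ρ γ Z : ℕ → ℝ) (w : ℕ → Fin N → ℝ)
    (hβ : ∀ k n, β (k + 1) n = 1 ∨ β (k + 1) n = -1)
    (hw0 : ∀ n, w 0 n = 1 / N)
    (hZ : ∀ k, Z (k + 1) = ∑ n, w k n * Real.exp (-(α (k + 1)) * β (k + 1) n))
    (hwrec : ∀ k n,
      w (k + 1) n = w k n * Real.exp (-(α (k + 1)) * β (k + 1) n) / Z (k + 1))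
    (hρ : ∀ k, ρ (k + 1) =
      ∑ n ∈ Finset.univ.filter (fun n => β (k + 1) n = -1), w k n)
    (hρ0 : ∀ k, 0 < ρ (k + 1)) (hρ1 : ∀ k, ρ (k + 1) < 1)
    (hα : ∀ k, α (k + 1) = (1 / q) * Real.log ((1 - ρ (k + 1)) / ρ (k + 1)))
    (hγ : ∀ k, γ (k + 1) = 1 / 2 - ρ (k + 1))
    (K : ℕ) (hK : 1 ≤ K) :
    ((1 / (N : ℝ)) * ∑ n,
        (if (∑ k ∈ Finset.range K, α (k + 1) * β (k + 1) n) ≤ 0 then (1 : ℝ) else 0)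
      ≤ (1 / (N : ℝ)) * ∑ n,
        Real.exp (-(∑ k ∈ Finset.range K, α (k + 1) * β (k + 1) n))) ∧
    ((1 / (N : ℝ)) * ∑ n,
        Real.exp (-(∑ k ∈ Finset.range K, α (k + 1) * β (k + 1) n))
      = ∏ k ∈ Finset.range K, Z (k + 1)) ∧
    (∏ k ∈ Finset.range K, Z (k + 1)
      ≤ Real.exp (-(4 / q) * ∑ k ∈ Finset.range K, (γ (k + 1)) ^ 2)) := by
  have hN0 : (0 : ℝ) < N := by exact_mod_cast hN
  haveI : Nonempty (Fin N) := ⟨⟨0, hN⟩⟩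
  have hZpos_of : ∀ k, (∀ n, 0 < w k n) → 0 < Z (k + 1) := by
    intro k h
    rw [hZ]
    exact Finset.sum_pos (fun n _ => mul_pos (h n) (Real.exp_pos _)) Finset.univ_nonempty
  have hwpos : ∀ k n, 0 < w k n := by
    intro k
    induction k with
    | zero => intro n; rw [hw0]; positivity
    | succ k ih =>
      intro n
      rw [hwrec]
      exact div_pos (mul_pos (ih n) (Real.exp_pos _)) (hZpos_of k ih)
  have hZpos : ∀ k, 0 < Z (k + 1) := fun k => hZpos_of k (hwpos k)
  have hwsum : ∀ k, ∑ n, w k n = 1 := by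
    intro k
    cases k with
    | zero =>
      simp only [hw0, Finset.sum_const, Finset.card_univ, Fintype.card_fin, nsmul_eq_mul]
      field_simp
    | succ k =>
      simp only [hwrec]
      rw [← Finset.sum_div, ← hZ, div_self (hZpos k).ne']
  have hprod : ∀ (K : ℕ) (n : Fin N), w K n * ∏ k ∈ Finset.range K, Z (k + 1)
      = (1 / (N : ℝ)) * Real.exp (-(∑ k ∈ Finset.range K, α (k + 1) * β (k + 1) n)) := by
    intro K n
    induction K with
    | zero => simp [hw0]
    | succ K ih =>
      rw [Finset.prod_range_succ, Finset.sum_range_succ, neg_add, Real.exp_add, ← mul_assoc,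
        ← mul_assoc, ← ih, hwrec, neg_mul]
      have := (hZpos K).ne'
      field_simp
  have hZstep : ∀ k, Z (k + 1) ≤ Real.exp (-(4 / q) * (γ (k + 1)) ^ 2) := by
    intro k
    have hcomp : ∑ n ∈ Finset.univ.filter (fun n => ¬ β (k + 1) n = -1), w k n
        = 1 - ρ (k + 1) := by
      have := Finset.sum_filter_add_sum_filter_not Finset.univ
        (fun n => β (k + 1) n = -1) (w k)
      rw [hwsum, ← hρ] at this
      linarith
    have hZval : Z (k + 1) = (1 - ρ (k + 1)) * Real.exp (-(α (k + 1)))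
        + ρ (k + 1) * Real.exp (α (k + 1)) := by
      rw [hZ, ← Finset.sum_filter_add_sum_filter_not Finset.univ
        (fun n => β (k + 1) n = -1), add_comm, ← hcomp, Finset.sum_mul]
      congr 1
      · refine Finset.sum_congr rfl fun n hn => ?_
        have h := (hβ k n).resolve_right (Finset.mem_filter.1 hn).2
        rw [h, mul_one]
      · rw [hρ, Finset.sum_mul]
        refine Finset.sum_congr rfl fun n hn => ?_
        rw [(Finset.mem_filter.1 hn).2]
        simp
    rw [hZval, hα, hγ]
    exact apw_step q _ hq (hρ0 k) (hρ1 k)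
  refine ⟨?_, ?_, ?_⟩
  · refine mul_le_mul_of_nonneg_left (Finset.sum_le_sum fun n _ => ?_) (by positivity)
    split_ifs with h
    · exact Real.one_le_exp (by linarith)
    · exact (Real.exp_pos _).le
  · rw [Finset.mul_sum, Finset.sum_congr rfl fun n _ => (hprod K n).symm, ← Finset.sum_mul,
      hwsum, one_mul]
  · rw [Finset.mul_sum, Real.exp_sum]
    exact Finset.prod_le_prod (fun k _ => (hZpos k).le) fun k _ => hZstep k
end

section
/- Let q ≥ 2, let ρ ∈ (0,1), set γ = 1/2 − ρ and α = (1/q)·log((1−ρ)/ρ). Then (1−ρ)·exp(−α) + ρ·exp(α) ≤ exp(−4γ²/q). -/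
/-- For `q ≥ 2`, `ρ ∈ (0,1)`, `γ = 1/2 − ρ`, `α = (1/q)·log((1−ρ)/ρ)`:
`(1−ρ)·exp(−α) + ρ·exp(α) ≤ exp(−4γ²/q)`. -/
theorem stmt_4 (q ρ γ α : ℝ) (hq : 2 ≤ q) (hρ0 : 0 < ρ) (hρ1 : ρ < 1)
    (hγ : γ = 1 / 2 - ρ) (hα : α = (1 / q) * Real.log ((1 - ρ) / ρ)) :
    (1 - ρ) * Real.exp (-α) + ρ * Real.exp α
      ≤ Real.exp (-(4 * γ ^ 2) / q) := by
  have hq0 : 0 < q := by linarith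
  have hr : 0 < (1 - ρ) / ρ := div_pos (by linarith) hρ0
  set L := Real.log ((1 - ρ) / ρ) with hL
  have hs0 : 0 ≤ 2 / q := by positivity
  have hs1 : 2 / q ≤ 1 := by rw [div_le_one hq0]; exact hq
  have hJ := (Real.concaveOn_rpow hs0 hs1).2
    (show Real.exp (-(L / 2)) ∈ Set.Ici 0 from (Real.exp_pos _).le)
    (show Real.exp (L / 2) ∈ Set.Ici 0 from (Real.exp_pos _).le)
    (show 0 ≤ 1 - ρ by linarith) hρ0.le (by ring)
  simp only [smul_eq_mul, ← Real.exp_mul] at hJ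
  have e1 : -(L / 2) * (2 / q) = -α := by rw [hα]; field_simp
  have e2 : (L / 2) * (2 / q) = α := by rw [hα]; field_simp
  rw [e1, e2] at hJ
  refine hJ.trans ?_
  have hw : 0 < Real.exp (L / 2) := Real.exp_pos _
  have hw2 : Real.exp (L / 2) ^ 2 * ρ = 1 - ρ := by
    rw [← Real.exp_nat_mul]
    have : ((2 : ℕ) : ℝ) * (L / 2) = L := by push_cast; ring
    rw [this, hL, Real.exp_log hr]; field_simp
  have hE : (1 - ρ) * Real.exp (-(L / 2)) + ρ * Real.exp (L / 2) = 2 * ρ * Real.exp (L / 2) := by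
    rw [Real.exp_neg, ← hw2]; field_simp; ring
  have hB : 2 * ρ * Real.exp (L / 2) ≤ Real.exp (-(2 * γ ^ 2)) := by
    refine le_trans (le_abs_self _) (abs_le_of_sq_le_sq ?_ (Real.exp_pos _).le)
    rw [← Real.exp_nat_mul]
    have h1 := Real.add_one_le_exp (((2 : ℕ) : ℝ) * -(2 * γ ^ 2))
    refine le_trans (le_of_eq ?_) h1
    rw [hγ]; push_cast
    linear_combination 4 * ρ * hw2
  rw [hE]
  refine (Real.rpow_le_rpow (by positivity) hB hs0).trans (le_of_eq ?_)
  rw [← Real.exp_mul]; congr 1; field_simp; ring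
end

section
/- Suppose A_K > 0 and let θ > 0. Then (1/N)·|{n : m_K(n) ≤ θ}| ≤ exp(θ·A_K)·∏_{k=1}^K Z_k. -/
/-- If `A_K > 0` and `θ > 0`, then
`(1/N)·|{n : m_K(n) ≤ θ}| ≤ exp(θ·A_K)·∏_{k=1}^K Z_k`. -/
theorem stmt_8 (N : ℕ) (hN : 1 ≤ N) (q : ℝ) (hq : 2 ≤ q)
    (β : ℕ → Fin N → ℝ) (α ρ γ Z : ℕ → ℝ) (w : ℕ → Fin N → ℝ)
    (hβ : ∀ k n, β (k + 1) n = 1 ∨ β (k + 1) n = -1)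
    (hw0 : ∀ n, w 0 n = 1 / N)
    (hZ : ∀ k, Z (k + 1) = ∑ n, w k n * Real.exp (-(α (k + 1)) * β (k + 1) n))
    (hwrec : ∀ k n,
      w (k + 1) n = w k n * Real.exp (-(α (k + 1)) * β (k + 1) n) / Z (k + 1))
    (hρ : ∀ k, ρ (k + 1) =
      ∑ n ∈ Finset.univ.filter (fun n => β (k + 1) n = -1), w k n)
    (hρ0 : ∀ k, 0 < ρ (k + 1)) (hρ1 : ∀ k, ρ (k + 1) < 1)
    (hα : ∀ k, α (k + 1) = (1 / q) * Real.log ((1 - ρ (k + 1)) / ρ (k + 1)))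
    (hγ : ∀ k, γ (k + 1) = 1 / 2 - ρ (k + 1))
    (K : ℕ) (hK : 1 ≤ K)
    (hA : 0 < ∑ k ∈ Finset.range K, α (k + 1))
    (θ : ℝ) (hθ : 0 < θ) :
    (1 / (N : ℝ)) *
        ((Finset.univ.filter (fun n : Fin N =>
          (∑ k ∈ Finset.range K, α (k + 1) * β (k + 1) n) /
            (∑ k ∈ Finset.range K, α (k + 1)) ≤ θ)).card : ℝ)
      ≤ Real.exp (θ * ∑ k ∈ Finset.range K, α (k + 1)) *
          ∏ k ∈ Finset.range K, Z (k + 1) := by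
  have hNpos : (0 : ℝ) < N := by exact_mod_cast hN
  haveI : Nonempty (Fin N) := ⟨⟨0, hN⟩⟩
  have hZp : ∀ k, (∀ n, 0 < w k n) → 0 < Z (k + 1) := by
    intro k hk
    rw [hZ]
    exact Finset.sum_pos (fun n _ => mul_pos (hk n) (Real.exp_pos _)) Finset.univ_nonempty
  have hwp : ∀ k n, 0 < w k n := by
    intro k
    induction k with
    | zero => intro n; rw [hw0]; positivity
    | succ k ih =>
      intro n
      rw [hwrec]
      exact div_pos (mul_pos (ih n) (Real.exp_pos _)) (hZp k ih)
  have hprod : ∀ k n, w k n * ∏ j ∈ Finset.range k, Z (j + 1) =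
      (1 / (N : ℝ)) * Real.exp (-∑ j ∈ Finset.range k, α (j + 1) * β (j + 1) n) := by
    intro k n
    induction k with
    | zero => simp [hw0]
    | succ k ih =>
      have hz := (hZp k (hwp k)).ne'
      rw [Finset.prod_range_succ, Finset.sum_range_succ, neg_add, Real.exp_add, ← mul_assoc,
        ← mul_assoc, ← ih, hwrec, ← neg_mul]
      field_simp
  have hsum : ∑ n, w K n = 1 := by
    obtain ⟨k, rfl⟩ : ∃ k, K = k + 1 := ⟨K - 1, by omega⟩
    simp_rw [hwrec]
    rw [← Finset.sum_div, ← hZ]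
    exact div_self (hZp k (hwp k)).ne'
  have key : ∏ k ∈ Finset.range K, Z (k + 1) = ∑ n, (1 / (N : ℝ)) *
      Real.exp (-∑ j ∈ Finset.range K, α (j + 1) * β (j + 1) n) := by
    simp_rw [← hprod]
    rw [← Finset.sum_mul, hsum, one_mul]
  rw [key, Finset.mul_sum, mul_comm, ← nsmul_eq_mul, ← Finset.sum_const]
  refine le_trans (Finset.sum_le_sum ?_)
    (Finset.sum_le_sum_of_subset_of_nonneg (Finset.subset_univ _) ?_)
  · intro n hn
    have h := (Finset.mem_filter.mp hn).2
    rw [div_le_iff₀ hA] at h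
    rw [mul_left_comm, ← Real.exp_add]
    exact le_mul_of_one_le_right (by positivity) (Real.one_le_exp (by linarith))
  · intros
    positivity
end

section
/- (Training Stability) Let q ≥ 2 and γ_k = 1/2 − ρ_k. Under the condition A_K > 0, for any θ > 0 it holds that (1/N)·|{n : m_K(n) > θ}| ≥ 1 − ∏_{k=1}^K δ(θ, γ_k), where δ(θ, γ) := (1−2γ)^{(1−θ)/q}·(1+2γ)^{(1+θ)/q} > 0. -/
lemma aux_concave (s r : ℝ) (hs0 : 0 ≤ s) (hs1 : s ≤ 1) (h0 : 0 < r) (h1 : r < 1) :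
    (1 - r) ^ s + r ^ s ≤ 2 ^ (1 - s) := by
  have hx : (1 - r) ∈ Set.Ici (0 : ℝ) := by simp; linarith
  have hy : r ∈ Set.Ici (0 : ℝ) := by simp; linarith
  have h := (Real.concaveOn_rpow hs0 hs1).2 hx hy
    (show (0 : ℝ) ≤ 1 / 2 by norm_num) (show (0 : ℝ) ≤ 1 / 2 by norm_num) (by norm_num)
  simp only [smul_eq_mul] at h
  have e : (1 / 2 * (1 - r) + 1 / 2 * r : ℝ) = 2⁻¹ := by ring
  rw [e, Real.inv_rpow (by norm_num)] at h
  rw [Real.rpow_sub (by norm_num), Real.rpow_one, div_eq_mul_inv]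
  linarith

lemma aux_Z (q θ r a : ℝ) (hq : 2 ≤ q) (h0 : 0 < r) (h1 : r < 1)
    (ha : a = (1 / q) * Real.log ((1 - r) / r)) :
    Real.exp (θ * a) * ((1 - r) * Real.exp (-a) + r * Real.exp a) ≤
      (2 * r) ^ ((1 - θ) / q) * (2 * (1 - r)) ^ ((1 + θ) / q) := by
  have hq0 : q ≠ 0 := by linarith
  have h1' : 0 < 1 - r := by linarith
  have hc := aux_concave (1 - 2 / q) r
    (by rw [sub_nonneg, div_le_one (by linarith)]; exact hq)
    (by have : 0 ≤ 2 / q := by positivity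
        linarith) h0 h1
  rw [Real.log_div h1'.ne' h0.ne'] at ha
  rw [Real.rpow_def_of_pos h0, Real.rpow_def_of_pos h1', Real.rpow_def_of_pos two_pos] at hc
  rw [Real.rpow_def_of_pos (by linarith), Real.rpow_def_of_pos (by linarith),
    Real.log_mul two_ne_zero h0.ne', Real.log_mul two_ne_zero h1'.ne']
  have eL := Real.exp_log h0
  have eM := Real.exp_log h1'
  set L := Real.log r
  set M := Real.log (1 - r)
  have hc2 := mul_le_mul_of_nonneg_left hc (Real.exp_pos (θ * a + (M + L) / q)).le
  rw [mul_add, ← Real.exp_add, ← Real.exp_add, ← Real.exp_add] at hc2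
  have e1 : Real.exp (θ * a) * ((1 - r) * Real.exp (-a)) =
      Real.exp (θ * a + (M + L) / q + M * (1 - 2 / q)) := by
    rw [← eM, ← Real.exp_add, ← Real.exp_add, ha]
    congr 1; field_simp; ring
  have e2 : Real.exp (θ * a) * (r * Real.exp a) =
      Real.exp (θ * a + (M + L) / q + L * (1 - 2 / q)) := by
    rw [← eL, ← Real.exp_add, ← Real.exp_add, ha]
    congr 1; field_simp; ring
  rw [mul_add, e1, e2, ← Real.exp_add]
  refine hc2.trans (le_of_eq ?_)
  rw [ha]; congr 1; field_simp; ring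

/-- Training Stability (Theorem): under `A_K > 0`, for any `θ > 0`,
`(1/N)·|{n : m_K(n) > θ}| ≥ 1 − ∏_{k=1}^K δ(θ, γ_k)`, where
`δ(θ, γ) = (1−2γ)^{(1−θ)/q}·(1+2γ)^{(1+θ)/q} > 0`. -/
theorem stmt_11 (N : ℕ) (hN : 1 ≤ N) (q : ℝ) (hq : 2 ≤ q)
    (β : ℕ → Fin N → ℝ) (α ρ γ Z : ℕ → ℝ) (w : ℕ → Fin N → ℝ)
    (hβ : ∀ k n, β (k + 1) n = 1 ∨ β (k + 1) n = -1)
    (hw0 : ∀ n, w 0 n = 1 / N)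
    (hZ : ∀ k, Z (k + 1) = ∑ n, w k n * Real.exp (-(α (k + 1)) * β (k + 1) n))
    (hwrec : ∀ k n,
      w (k + 1) n = w k n * Real.exp (-(α (k + 1)) * β (k + 1) n) / Z (k + 1))
    (hρ : ∀ k, ρ (k + 1) =
      ∑ n ∈ Finset.univ.filter (fun n => β (k + 1) n = -1), w k n)
    (hρ0 : ∀ k, 0 < ρ (k + 1)) (hρ1 : ∀ k, ρ (k + 1) < 1)
    (hα : ∀ k, α (k + 1) = (1 / q) * Real.log ((1 - ρ (k + 1)) / ρ (k + 1)))
    (hγ : ∀ k, γ (k + 1) = 1 / 2 - ρ (k + 1))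
    (K : ℕ) (hK : 1 ≤ K)
    (hA : 0 < ∑ k ∈ Finset.range K, α (k + 1))
    (θ : ℝ) (hθ : 0 < θ) :
    (∀ k ∈ Finset.range K,
      0 < (1 - 2 * γ (k + 1)) ^ ((1 - θ) / q) *
            (1 + 2 * γ (k + 1)) ^ ((1 + θ) / q)) ∧
    1 - ∏ k ∈ Finset.range K,
          (1 - 2 * γ (k + 1)) ^ ((1 - θ) / q) *
            (1 + 2 * γ (k + 1)) ^ ((1 + θ) / q)
      ≤ (1 / (N : ℝ)) *
          ((Finset.univ.filter (fun n : Fin N =>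
            θ < (∑ k ∈ Finset.range K, α (k + 1) * β (k + 1) n) /
              (∑ k ∈ Finset.range K, α (k + 1)))).card : ℝ) := by
  have p1 : ∀ k, 1 - 2 * γ (k + 1) = 2 * ρ (k + 1) := fun k => by rw [hγ]; ring
  have p2 : ∀ k, 1 + 2 * γ (k + 1) = 2 * (1 - ρ (k + 1)) := fun k => by rw [hγ]; ring
  have hNpos : (0 : ℝ) < N := by exact_mod_cast hN
  simp only [p1, p2]
  refine ⟨fun k _ => ?_, ?_⟩
  · have := hρ0 k
    have h' : 0 < 1 - ρ (k + 1) := by linarith [hρ1 k]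
    positivity
  -- closed form of the normalizer
  have hZf : ∀ k, ∑ n, w k n = 1 →
      Z (k + 1) = (1 - ρ (k + 1)) * Real.exp (-α (k + 1)) + ρ (k + 1) * Real.exp (α (k + 1)) := by
    intro k hs
    have hsplit := Finset.sum_filter_add_sum_filter_not Finset.univ
      (fun n => β (k + 1) n = -1) (fun n => w k n)
    rw [hs, ← hρ k] at hsplit
    rw [hZ, ← Finset.sum_filter_add_sum_filter_not Finset.univ (fun n => β (k + 1) n = -1)]
    have a1 : ∑ n ∈ Finset.univ.filter (fun n => β (k + 1) n = -1),
        w k n * Real.exp (-(α (k + 1)) * β (k + 1) n) = ρ (k + 1) * Real.exp (α (k + 1)) := by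
      rw [hρ, Finset.sum_mul]
      refine Finset.sum_congr rfl fun n hn => ?_
      rw [(Finset.mem_filter.mp hn).2]; simp
    have a2 : ∑ n ∈ Finset.univ.filter (fun n => ¬ β (k + 1) n = -1),
        w k n * Real.exp (-(α (k + 1)) * β (k + 1) n) =
        (1 - ρ (k + 1)) * Real.exp (-α (k + 1)) := by
      rw [← eq_sub_of_add_eq' hsplit, Finset.sum_mul]
      refine Finset.sum_congr rfl fun n hn => ?_
      rw [(hβ k n).resolve_right (Finset.mem_filter.mp hn).2]; simp
    rw [a1, a2]; ring
  have hZp : ∀ k, ∑ n, w k n = 1 → 0 < Z (k + 1) := by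
    intro k hs
    rw [hZf k hs]
    have := hρ0 k
    have h' : 0 < 1 - ρ (k + 1) := by linarith [hρ1 k]
    positivity
  have hsum : ∀ k, ∑ n, w k n = 1 := by
    intro k
    induction k with
    | zero => simp [hw0, hNpos.ne']
    | succ k ih =>
      simp only [hwrec]
      rw [← Finset.sum_div, ← hZ, div_self (hZp k ih).ne']
  have hexp : ∀ k n, (1 / (N : ℝ)) * Real.exp (-∑ j ∈ Finset.range k, α (j + 1) * β (j + 1) n) =
      w k n * ∏ j ∈ Finset.range k, Z (j + 1) := by
    intro k n
    induction k with
    | zero => simp [hw0]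
    | succ k ih =>
      have hz := (hZp k (hsum k)).ne'
      rw [Finset.sum_range_succ, Finset.prod_range_succ, neg_add, Real.exp_add, ← mul_assoc, ih,
        hwrec, ← neg_mul]
      field_simp
  set A := ∑ k ∈ Finset.range K, α (k + 1) with hAdef
  set g : Fin N → ℝ := fun n => ∑ k ∈ Finset.range K, α (k + 1) * β (k + 1) n with hg
  have hprod : Real.exp (θ * A) * ∏ j ∈ Finset.range K, Z (j + 1) ≤
      ∏ k ∈ Finset.range K, (2 * ρ (k + 1)) ^ ((1 - θ) / q) *
        (2 * (1 - ρ (k + 1))) ^ ((1 + θ) / q) := by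
    rw [hAdef, Finset.mul_sum, Real.exp_sum, ← Finset.prod_mul_distrib]
    refine Finset.prod_le_prod (fun k _ => ?_) (fun k _ => ?_)
    · have := hZp k (hsum k)
      positivity
    · rw [hZf k (hsum k)]
      exact aux_Z q θ _ _ hq (hρ0 k) (hρ1 k) (hα k)
  have htot : (1 / (N : ℝ)) * ∑ n, Real.exp (θ * A - g n) =
      Real.exp (θ * A) * ∏ j ∈ Finset.range K, Z (j + 1) := by
    have : ∀ n, (1 / (N : ℝ)) * Real.exp (θ * A - g n) =
        w K n * (Real.exp (θ * A) * ∏ j ∈ Finset.range K, Z (j + 1)) := by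
      intro n
      have h := hexp K n
      rw [sub_eq_add_neg, Real.exp_add]
      linear_combination Real.exp (θ * A) * h
    rw [Finset.mul_sum, Finset.sum_congr rfl fun n _ => this n, ← Finset.sum_mul, hsum, one_mul]
  have hcount : (N : ℝ) ≤ ∑ n, Real.exp (θ * A - g n) +
      ((Finset.univ.filter (fun n : Fin N => θ < g n / A)).card : ℝ) := by
    have e : (N : ℝ) = ∑ _n : Fin N, (1 : ℝ) := by simp
    rw [Finset.card_filter, Nat.cast_sum, ← Finset.sum_add_distrib]
    conv_lhs => rw [e]
    refine Finset.sum_le_sum fun n _ => ?_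
    by_cases h : θ < g n / A
    · simp only [h, if_true, Nat.cast_one]
      linarith [Real.exp_pos (θ * A - g n)]
    · simp only [h, if_false, Nat.cast_zero, add_zero]
      have h2 := not_lt.mp h
      rw [div_le_iff₀ hA] at h2
      exact Real.one_le_exp (by linarith)
  have h1 : (1 : ℝ) = (1 / N) * N := by field_simp
  have h2 := mul_le_mul_of_nonneg_left hcount (show (0 : ℝ) ≤ 1 / N by positivity)
  rw [← h1, mul_add, htot] at h2
  linarith
end

section
/- Let q ≥ 2 and let γ_{K+1}, …, γ_{K+Δ} be real numbers in (0, 1/2) with γ_min := min{γ_{K+1}, …, γ_{K+Δ}}. For any θ with 0 < θ ≤ γ_k < 1/2 and any k ∈ {K+1, …, K+Δ}, it holds that δ(θ, γ_k) ≤ δ(γ_k, γ_k) ≤ δ(γ_min, γ_min) < 1, where δ(θ, γ) := (1−2γ)^{(1−θ)/q}·(1+2γ)^{(1+θ)/q}. -/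
/-- The exponent function (times `q`). -/
noncomputable def auxF (x : ℝ) : ℝ :=
  (1 - x) * Real.log (1 - 2 * x) + (1 + x) * Real.log (1 + 2 * x)

lemma auxF_hasDeriv (x : ℝ) (h0 : 0 ≤ x) (h1 : x < 1 / 2) :
    HasDerivAt auxF (((-1) * Real.log (1 - 2 * x) + (1 - x) * (-2 / (1 - 2 * x))) +
      (1 * Real.log (1 + 2 * x) + (1 + x) * (2 / (1 + 2 * x)))) x := by
  have ha : HasDerivAt (fun y : ℝ => 1 - 2 * y) (-2) x := by
    simpa using ((hasDerivAt_id x).const_mul 2).const_sub 1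
  have hb : HasDerivAt (fun y : ℝ => 1 + 2 * y) 2 x := by
    simpa using ((hasDerivAt_id x).const_mul 2).const_add 1
  have hc : HasDerivAt (fun y : ℝ => 1 - y) (-1) x := by
    simpa using (hasDerivAt_id x).const_sub 1
  have hd : HasDerivAt (fun y : ℝ => 1 + y) 1 x := by
    simpa using (hasDerivAt_id x).const_add 1
  exact (hc.mul (ha.log (by linarith))).add (hd.mul (hb.log (by linarith)))

lemma auxF_anti : StrictAntiOn auxF (Set.Ico 0 (1 / 2)) := by
  apply strictAntiOn_of_deriv_neg (convex_Ico _ _)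
  · intro x hx
    exact (auxF_hasDeriv x hx.1 hx.2).continuousAt.continuousWithinAt
  · intro x hx
    rw [interior_Ico] at hx
    obtain ⟨h0, h1⟩ := hx
    rw [(auxF_hasDeriv x h0.le h1).deriv]
    have ha : 0 < 1 - 2 * x := by linarith
    have hb : 0 < 1 + 2 * x := by linarith
    have hr : 1 < (1 + 2 * x) / (1 - 2 * x) := by
      rw [lt_div_iff₀ ha]; linarith
    have h := Real.self_lt_sinh_iff.2 (Real.log_pos hr)
    rw [Real.sinh_log (by linarith), Real.log_div hb.ne' ha.ne'] at h
    have e : (1 - x) * (-2 / (1 - 2 * x)) + (1 + x) * (2 / (1 + 2 * x)) =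
        -(((1 + 2 * x) / (1 - 2 * x) - ((1 + 2 * x) / (1 - 2 * x))⁻¹) / 2) := by
      have ha' := ha.ne'
      have hb' := hb.ne'
      rw [inv_div, neg_div, mul_neg, mul_div_assoc', mul_div_assoc', neg_add_eq_sub,
        div_sub_div _ _ hb' ha', div_sub_div _ _ ha' hb', div_div, ← neg_div,
        div_eq_div_iff (by positivity) (by positivity)]
      ring
    linarith

lemma aux_delta (q t x : ℝ) (h0 : 0 < x) (h1 : x < 1 / 2) :
    (1 - 2 * x) ^ ((1 - t) / q) * (1 + 2 * x) ^ ((1 + t) / q) =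
      Real.exp (((1 - t) * Real.log (1 - 2 * x) + (1 + t) * Real.log (1 + 2 * x)) / q) := by
  rw [Real.rpow_def_of_pos (by linarith), Real.rpow_def_of_pos (by linarith), ← Real.exp_add]
  congr 1
  ring

/-- Lemma on `δ(θ, γ) = (1−2γ)^{(1−θ)/q}·(1+2γ)^{(1+θ)/q}`: for `q ≥ 2`,
`γ_{K+1}, …, γ_{K+Δ} ∈ (0, 1/2)` with minimum `γ_min`, and any
`0 < θ ≤ γ_k < 1/2` with `k ∈ {K+1, …, K+Δ}`:
`δ(θ, γ_k) ≤ δ(γ_k, γ_k) ≤ δ(γ_min, γ_min) < 1`. -/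
theorem stmt_12 (q : ℝ) (hq : 2 ≤ q) (K Δ : ℕ) (hΔ : 1 ≤ Δ)
    (γ : ℕ → ℝ)
    (hγ : ∀ k, K + 1 ≤ k → k ≤ K + Δ → 0 < γ k ∧ γ k < 1 / 2)
    (γmin : ℝ)
    (hmin : IsLeast {x : ℝ | ∃ k, K + 1 ≤ k ∧ k ≤ K + Δ ∧ γ k = x} γmin)
    (θ : ℝ) (k : ℕ) (hk1 : K + 1 ≤ k) (hk2 : k ≤ K + Δ)
    (hθ0 : 0 < θ) (hθγ : θ ≤ γ k) (hγk : γ k < 1 / 2) :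
    ((1 - 2 * γ k) ^ ((1 - θ) / q) * (1 + 2 * γ k) ^ ((1 + θ) / q)
        ≤ (1 - 2 * γ k) ^ ((1 - γ k) / q) * (1 + 2 * γ k) ^ ((1 + γ k) / q)) ∧
    ((1 - 2 * γ k) ^ ((1 - γ k) / q) * (1 + 2 * γ k) ^ ((1 + γ k) / q)
        ≤ (1 - 2 * γmin) ^ ((1 - γmin) / q) * (1 + 2 * γmin) ^ ((1 + γmin) / q)) ∧
    ((1 - 2 * γmin) ^ ((1 - γmin) / q) * (1 + 2 * γmin) ^ ((1 + γmin) / q) < 1) := by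
  have hq0 : 0 < q := by linarith
  obtain ⟨⟨m, hm1, hm2, rfl⟩, hlow⟩ := hmin
  have hle : γ m ≤ γ k := hlow ⟨k, hk1, hk2, rfl⟩
  obtain ⟨m0, m1⟩ := hγ m hm1 hm2
  have k0 : 0 < γ k := lt_of_lt_of_le m0 hle
  rw [aux_delta q θ _ k0 hγk, aux_delta q (γ k) _ k0 hγk, aux_delta q (γ m) _ m0 m1]
  refine ⟨?_, ?_, ?_⟩
  · apply Real.exp_le_exp.2
    apply div_le_div_of_nonneg_right _ hq0.le
    have hl : Real.log (1 - 2 * γ k) ≤ Real.log (1 + 2 * γ k) :=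
      Real.log_le_log (by linarith) (by linarith)
    nlinarith [mul_nonneg (sub_nonneg.2 hθγ) (sub_nonneg.2 hl)]
  · apply Real.exp_le_exp.2
    apply div_le_div_of_nonneg_right _ hq0.le
    exact auxF_anti.antitoneOn ⟨m0.le, m1⟩ ⟨k0.le, hγk⟩ hle
  · rw [Real.exp_lt_one_iff]
    apply div_neg_of_neg_of_pos _ hq0
    have h := auxF_anti ⟨le_refl 0, by norm_num⟩ ⟨m0.le, m1⟩ m0
    simpa [auxF] using h
end
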